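/- Safe Execution: If ∅ ⊢ S ⇒ Γ' and ⟨S, σ₀⟩ ↝* ⟨S', σ'⟩ (reflexive-transitive closure of the small-step relation) from a store σ₀ well-typed for the empty context, then the configuration ⟨S', σ'⟩ is not stuck: either S' is skip or there exist S'' and σ'' with ⟨S', σ'⟩ ↝ ⟨S'', σ''⟩. -/

import Mathlib

inductive Ty : Type
  | int
  | bool
deriving DecidableEq

inductive Expr : Type
  | int (n : ℤ)
  | tt
  | ff
  | var (x : String)
  | plus (e₁ e₂ : Expr)
  | isOp (e₁ e₂ : Expr)

inductive Val : Type
  | int (n : ℤ)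
  | bool (b : Bool)

/-- A value has a type: integer values have type `Int`, booleans have type `Bool`. -/
inductive ValHasTy : Val → Ty → Prop
  | int (n : ℤ) : ValHasTy (.int n) .int
  | bool (b : Bool) : ValHasTy (.bool b) .bool

/-- Typing contexts: finite maps from variables to types. -/
def Ctx : Type := String → Option Ty

/-- Stores: partial maps from variables to values. -/
def Store : Type := String → Option Val

/-- Expression typing `Γ ⊢ e : τ`. -/
inductive HasTy : Ctx → Expr → Ty → Prop
  | int (Γ : Ctx) (n : ℤ) : HasTy Γ (.int n) .int
  | tt (Γ : Ctx) : HasTy Γ .tt .bool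
  | ff (Γ : Ctx) : HasTy Γ .ff .bool
  | var (Γ : Ctx) (x : String) (τ : Ty) : Γ x = some τ → HasTy Γ (.var x) τ
  | plus (Γ : Ctx) (e₁ e₂ : Expr) :
      HasTy Γ e₁ .int → HasTy Γ e₂ .int → HasTy Γ (.plus e₁ e₂) .int
  | rel (Γ : Ctx) (e₁ e₂ : Expr) (τ : Ty) :
      HasTy Γ e₁ τ → HasTy Γ e₂ τ → HasTy Γ (.isOp e₁ e₂) .bool

inductive Stmt : Type
  | skip
  | letBe (x : String) (e : Expr)
  | ifThenElse (e : Expr) (s₁ s₂ : Stmt)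
  | print (e : Expr)
  | seq (s₁ s₂ : Stmt)

/-- Statement typing `Γ ⊢ S ⇒ Γ'`. -/
inductive StmtTy : Ctx → Stmt → Ctx → Prop
  | skip (Γ : Ctx) : StmtTy Γ .skip Γ
  | letBe (Γ : Ctx) (x : String) (e : Expr) (τ : Ty) :
      HasTy Γ e τ → StmtTy Γ (.letBe x e) (fun y => if y = x then some τ else Γ y)
  | ifThenElse (Γ : Ctx) (e : Expr) (s₁ s₂ : Stmt) :
      HasTy Γ e .bool → StmtTy Γ s₁ Γ → StmtTy Γ s₂ Γ →
      StmtTy Γ (.ifThenElse e s₁ s₂) Γ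
  | print (Γ : Ctx) (e : Expr) (τ : Ty) : HasTy Γ e τ → StmtTy Γ (.print e) Γ
  | seq (Γ Γ' Γ'' : Ctx) (s₁ s₂ : Stmt) :
      StmtTy Γ s₁ Γ' → StmtTy Γ' s₂ Γ'' → StmtTy Γ (.seq s₁ s₂) Γ''

/-- Big-step expression evaluation `σ ⊢ e ⇓ v`. -/
inductive Eval : Store → Expr → Val → Prop
  | int (σ : Store) (n : ℤ) : Eval σ (.int n) (.int n)
  | tt (σ : Store) : Eval σ .tt (.bool true)
  | ff (σ : Store) : Eval σ .ff (.bool false)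
  | var (σ : Store) (x : String) (v : Val) : σ x = some v → Eval σ (.var x) v
  | plus (σ : Store) (e₁ e₂ : Expr) (n₁ n₂ : ℤ) :
      Eval σ e₁ (.int n₁) → Eval σ e₂ (.int n₂) →
      Eval σ (.plus e₁ e₂) (.int (n₁ + n₂))
  | isInt (σ : Store) (e₁ e₂ : Expr) (n₁ n₂ : ℤ) :
      Eval σ e₁ (.int n₁) → Eval σ e₂ (.int n₂) →
      Eval σ (.isOp e₁ e₂) (.bool (n₁ == n₂))
  | isBool (σ : Store) (e₁ e₂ : Expr) (b₁ b₂ : Bool) :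
      Eval σ e₁ (.bool b₁) → Eval σ e₂ (.bool b₂) →
      Eval σ (.isOp e₁ e₂) (.bool (b₁ == b₂))

/-- Small-step statement semantics `⟨S, σ⟩ ↝ ⟨S', σ'⟩`. -/
inductive Step : Stmt → Store → Stmt → Store → Prop
  | letBe (σ : Store) (x : String) (e : Expr) (v : Val) :
      Eval σ e v → Step (.letBe x e) σ .skip (fun y => if y = x then some v else σ y)
  | ifTrue (σ : Store) (e : Expr) (s₁ s₂ : Stmt) :
      Eval σ e (.bool true) → Step (.ifThenElse e s₁ s₂) σ s₁ σ
  | ifFalse (σ : Store) (e : Expr) (s₁ s₂ : Stmt) :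
      Eval σ e (.bool false) → Step (.ifThenElse e s₁ s₂) σ s₂ σ
  | print (σ : Store) (e : Expr) (v : Val) : Eval σ e v → Step (.print e) σ .skip σ
  | seqSkip (σ : Store) (s₂ : Stmt) : Step (.seq .skip s₂) σ s₂ σ
  | seqStep (σ σ' : Store) (s₁ s₁' s₂ : Stmt) :
      Step s₁ σ s₁' σ' → Step (.seq s₁ s₂) σ (.seq s₁' s₂) σ'

/-- `σ ⊨ Γ`: the store is well-typed for the context. -/
def StoreTy (σ : Store) (Γ : Ctx) : Prop :=
  ∀ x τ, Γ x = some τ → ∃ v, σ x = some v ∧ ValHasTy v τ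

/-- The empty typing context. -/
def emptyCtx : Ctx := fun _ => none

/-- One step of the small-step semantics, as a relation on configurations. -/
def StepConf : Stmt × Store → Stmt × Store → Prop :=
  fun c c' => Step c.1 c.2 c'.1 c'.2

theorem eval_progress {Γ : Ctx} {σ : Store} (hσ : StoreTy σ Γ) {e : Expr} {τ : Ty}
    (h : HasTy Γ e τ) : ∃ v, Eval σ e v ∧ ValHasTy v τ := by
  induction h with
  | int n => exact ⟨_, .int _ _, .int _⟩
  | tt => exact ⟨_, .tt _, .bool _⟩
  | ff => exact ⟨_, .ff _, .bool _⟩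
  | var x τ hx =>
    obtain ⟨v, hv, ht⟩ := hσ x τ hx
    exact ⟨v, .var _ _ _ hv, ht⟩
  | plus e₁ e₂ _ _ ih₁ ih₂ =>
    obtain ⟨_, h₁, ⟨n₁⟩⟩ := ih₁
    obtain ⟨_, h₂, ⟨n₂⟩⟩ := ih₂
    exact ⟨_, .plus _ _ _ _ _ h₁ h₂, .int _⟩
  | rel e₁ e₂ τ _ _ ih₁ ih₂ =>
    obtain ⟨v₁, h₁, t₁⟩ := ih₁
    obtain ⟨v₂, h₂, t₂⟩ := ih₂
    cases t₁ <;> cases t₂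
    · exact ⟨_, .isInt _ _ _ _ _ h₁ h₂, .bool _⟩
    · exact ⟨_, .isBool _ _ _ _ _ h₁ h₂, .bool _⟩

theorem eval_preserves {Γ : Ctx} {σ : Store} (hσ : StoreTy σ Γ) {e : Expr} {τ : Ty} {v : Val}
    (h : HasTy Γ e τ) (he : Eval σ e v) : ValHasTy v τ := by
  cases he with
  | var x _ hx =>
    cases h with
    | var _ _ hΓ =>
      obtain ⟨w, hw, ht⟩ := hσ _ _ hΓ
      rw [hx] at hw
      cases hw
      exact ht
  | _ => cases h; constructor

theorem stmt_progress {Γ Γ' : Ctx} {S : Stmt} (h : StmtTy Γ S Γ') {σ : Store}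
    (hσ : StoreTy σ Γ) : S = .skip ∨ ∃ S'' σ'', Step S σ S'' σ'' := by
  induction h with
  | skip => exact .inl rfl
  | letBe Γ x e τ he =>
    obtain ⟨v, hv, _⟩ := eval_progress hσ he
    exact .inr ⟨_, _, .letBe _ _ _ _ hv⟩
  | ifThenElse Γ e s₁ s₂ he _ _ _ _ =>
    obtain ⟨_, hv, ht⟩ := eval_progress hσ he
    rcases ht with _ | b
    cases b
    · exact .inr ⟨_, _, .ifFalse _ _ _ _ hv⟩
    · exact .inr ⟨_, _, .ifTrue _ _ _ _ hv⟩
  | print Γ e τ he =>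
    obtain ⟨v, hv, _⟩ := eval_progress hσ he
    exact .inr ⟨_, _, .print _ _ _ hv⟩
  | seq Γ Γ' Γ'' s₁ s₂ _ _ ih₁ _ =>
    rcases ih₁ hσ with rfl | ⟨S', σ', hs⟩
    · exact .inr ⟨_, _, .seqSkip _ _⟩
    · exact .inr ⟨_, _, .seqStep _ _ _ _ _ hs⟩

theorem stmt_preserves {S S' : Stmt} {σ σ' : Store} (hs : Step S σ S' σ') {Γ Γ' : Ctx}
    (h : StmtTy Γ S Γ') (hσ : StoreTy σ Γ) : ∃ Δ, StmtTy Δ S' Γ' ∧ StoreTy σ' Δ := by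
  induction hs generalizing Γ Γ' with
  | letBe σ x e v hv =>
    cases h with
    | letBe _ _ _ τ he =>
      refine ⟨_, .skip _, ?_⟩
      intro y τ' hy
      by_cases hyx : y = x
      · simp only [hyx, if_true, Option.some.injEq] at hy ⊢
        subst hy
        exact ⟨v, rfl, eval_preserves hσ he hv⟩
      · simp only [hyx, if_false] at hy ⊢
        exact hσ y τ' hy
  | ifTrue σ e s₁ s₂ _ =>
    cases h with
    | ifThenElse _ _ _ _ _ h₁ _ => exact ⟨_, h₁, hσ⟩
  | ifFalse σ e s₁ s₂ _ =>
    cases h with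
    | ifThenElse _ _ _ _ _ _ h₂ => exact ⟨_, h₂, hσ⟩
  | print σ e v _ =>
    cases h with
    | print => exact ⟨_, .skip _, hσ⟩
  | seqSkip σ s₂ =>
    cases h with
    | seq _ _ _ _ _ h₁ h₂ =>
      cases h₁
      exact ⟨_, h₂, hσ⟩
  | seqStep σ σ' s₁ s₁' s₂ _ ih =>
    cases h with
    | seq _ _ _ _ _ h₁ h₂ =>
      obtain ⟨Δ, hΔ, hσΔ⟩ := ih h₁ hσ
      exact ⟨Δ, .seq _ _ _ _ _ hΔ h₂, hσΔ⟩

/-- **Safe execution**: starting from a well-typed statement and a store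
well-typed for the empty context, no reachable configuration is stuck. -/
theorem safe_execution (S : Stmt) (Γ' : Ctx) (σ₀ : Store) (S' : Stmt) (σ' : Store)
    (hty : StmtTy emptyCtx S Γ') (hσ₀ : StoreTy σ₀ emptyCtx)
    (hsteps : Relation.ReflTransGen StepConf (S, σ₀) (S', σ')) :
    S' = .skip ∨ ∃ S'' σ'', Step S' σ' S'' σ'' := by
  have key : ∀ c, Relation.ReflTransGen StepConf (S, σ₀) c →
      ∃ Δ, StmtTy Δ c.1 Γ' ∧ StoreTy c.2 Δ := by
    intro c hc
    induction hc with
    | refl => exact ⟨_, hty, hσ₀⟩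
    | tail _ hstep ih =>
      obtain ⟨Δ, h₁, h₂⟩ := ih
      exact stmt_preserves hstep h₁ h₂
  obtain ⟨Δ, h₁, h₂⟩ := key _ hsteps
  exact stmt_progress h₁ h₂
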